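/- The function C(z) = Σ_{n≥0} c_n z^n, holomorphic on the open unit disk, is transcendental over ℂ(X); in particular C is not a rational function. -/

import Mathlib

/-!
Write `dₙ = c₄ₙ₊₃` for the common value of `c` on the block `4n + 3, …, 4n + 6`, and
`D(X) = ∑ dₙ Xⁿ`. Summing `C` over blocks gives `C(X) = X + X² + X³(1 + X)(1 + X²) D(X⁴)`, and
the recursion mod 2 turns out to hold without reduction, `cₙ₊₁ = dₙ₊₁ + dₙ`, i.e.
`C(X) = (1 + X) D(X)`. Hence `D(X) = X + X³(1 + X²) D(X⁴)`.

The `dₙ` are nonnegative integers, infinitely many of them nonzero, so `D` tends to infinity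
radially at `1`. By the functional equation a radial pole at `ζ⁴` pulls back to one at `ζ` as long
as `ζ² ≠ -1`, which produces radial poles at all roots of unity of order `2 · 4ᵏ`. But at a radial
pole of a function satisfying an algebraic equation `P(z, C(z)) = 0` the leading coefficient of
`P` vanishes, so an algebraic function has only finitely many of them.
-/

open Bornology Filter Polynomial Set Topology
open scoped Polynomial.Bivariate

section CoboundedLimits

variable {α : Type*} {l : Filter α}

theorem tendsto_add_cobounded {E : Type*} [SeminormedAddCommGroup E] {u g : α → E} {u₀ : E}
    (hu : Tendsto u l (𝓝 u₀)) (hg : Tendsto g l (cobounded E)) :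
    Tendsto (fun x => u x + g x) l (cobounded E) := by
  rw [← tendsto_norm_atTop_iff_cobounded] at hg ⊢
  refine tendsto_atTop_mono (fun x => ?_) (hg.atTop_add hu.norm.neg)
  have := norm_sub_le (u x + g x) (u x)
  rw [add_sub_cancel_left] at this
  linarith

theorem tendsto_mul_cobounded {𝕜 : Type*} [NormedDivisionRing 𝕜] {u g : α → 𝕜} {u₀ : 𝕜}
    (hu : Tendsto u l (𝓝 u₀)) (hu₀ : u₀ ≠ 0) (hg : Tendsto g l (cobounded 𝕜)) :
    Tendsto (fun x => u x * g x) l (cobounded 𝕜) := by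
  rw [← tendsto_norm_atTop_iff_cobounded] at hg ⊢
  simpa only [norm_mul] using hu.norm.pos_mul_atTop (norm_pos_iff.mpr hu₀) hg

end CoboundedLimits

section RadialFilter

/-- The filter of radial approach to `ζ` from the origin: `r • ζ` with `r → 1⁻`. A function `f` has
a *radial pole* at `ζ` when `Tendsto f (radialFilter ζ) (cobounded _)`. -/
def radialFilter {E : Type*} [SMul ℝ E] (ζ : E) : Filter E :=
  map (fun r : ℝ => r • ζ) (𝓝[<] 1)

instance {E : Type*} [SMul ℝ E] (ζ : E) : (radialFilter ζ).NeBot :=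
  map_neBot

theorem eventually_mem_Ioo_zero_one : ∀ᶠ r : ℝ in 𝓝[<] 1, r ∈ Ioo 0 1 :=
  Ioo_mem_nhdsLT one_pos

theorem radialFilter_le_nhds {E : Type*} [AddCommGroup E] [Module ℝ E] [TopologicalSpace E]
    [ContinuousSMul ℝ E] (ζ : E) : radialFilter ζ ≤ 𝓝 ζ := by
  have h : Tendsto (fun r : ℝ => r • ζ) (𝓝 1) (𝓝 ((1 : ℝ) • ζ)) :=
    (continuous_id.smul continuous_const).tendsto 1
  rw [one_smul] at h
  exact h.mono_left nhdsWithin_le_nhds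

theorem eventually_radialFilter_norm_lt_one {E : Type*} [SeminormedAddCommGroup E]
    [NormedSpace ℝ E] {ζ : E} (hζ : ‖ζ‖ ≤ 1) : ∀ᶠ z in radialFilter ζ, ‖z‖ < 1 := by
  refine eventually_map.mpr ?_
  filter_upwards [eventually_mem_Ioo_zero_one] with r hr
  rw [norm_smul, Real.norm_of_nonneg hr.1.le]
  exact (mul_le_of_le_one_right hr.1.le hζ).trans_lt hr.2

theorem tendsto_pow_radialFilter {A : Type*} [Semiring A] [Algebra ℝ A] (ζ : A) {n : ℕ}
    (hn : n ≠ 0) : Tendsto (· ^ n) (radialFilter ζ) (radialFilter (ζ ^ n)) := by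
  have hpow : Tendsto (fun r : ℝ => r ^ n) (𝓝[<] 1) (𝓝[<] 1) := by
    refine tendsto_nhdsWithin_iff.mpr ⟨?_, ?_⟩
    · simpa only [one_pow] using ((continuous_pow n).tendsto (1 : ℝ)).mono_left nhdsWithin_le_nhds
    · filter_upwards [eventually_mem_Ioo_zero_one] with r hr
      exact pow_lt_one₀ hr.1.le hr.2 hn
  refine tendsto_map'_iff.mpr ((tendsto_map.comp hpow).congr fun r => ?_)
  exact (smul_pow r ζ n).symm

theorem tendsto_cobounded_of_mahler_equation {𝕜 : Type*} [NormedField 𝕜] [NormedAlgebra ℝ 𝕜]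
    {g u v : 𝕜 → 𝕜} {k : ℕ} (hk : k ≠ 0) {ζ : 𝕜} (hu : ContinuousAt u ζ) (hv : ContinuousAt v ζ)
    (hvζ : v ζ ≠ 0) (hg : ∀ᶠ z in radialFilter ζ, g z = u z + v z * g (z ^ k))
    (hpole : Tendsto g (radialFilter (ζ ^ k)) (cobounded 𝕜)) :
    Tendsto g (radialFilter ζ) (cobounded 𝕜) := by
  have hle := radialFilter_le_nhds ζ
  exact (tendsto_add_cobounded (hu.tendsto.mono_left hle) <| tendsto_mul_cobounded
    (hv.tendsto.mono_left hle) hvζ (hpole.comp (tendsto_pow_radialFilter ζ hk))).congr'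
      (hg.mono fun _ h => h.symm)

end RadialFilter

section AlgebraicFunctions

theorem continuous_evalEval {R : Type*} [CommSemiring R] [TopologicalSpace R]
    [IsTopologicalSemiring R] (P : R[X][Y]) :
    Continuous fun p : R × R => P.evalEval p.1 p.2 := by
  have hsum (p : R × R) : P.evalEval p.1 p.2 =
      ∑ i ∈ Finset.range (P.natDegree + 1), (P.coeff i).eval p.1 * p.2 ^ i := by
    rw [← eval₂_evalRingHom, eval₂_eq_sum_range]
    rfl
  simp only [hsum]
  fun_prop

/-- Dividing `P(z, f(z)) = 0` by the top power of `f(z)` gives an equation for the reversed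
polynomial at `(z, f(z)⁻¹)`, which tends to `(ζ, 0)`. -/
theorem leadingCoeff_isRoot_of_tendsto_cobounded {𝕜 α : Type*} [NormedField 𝕜] {l : Filter α}
    [l.NeBot] {z f : α → 𝕜} {ζ : 𝕜} {P : 𝕜[X][Y]} (hz : Tendsto z l (𝓝 ζ))
    (hf : Tendsto f l (cobounded 𝕜)) (hP : ∀ᶠ x in l, P.evalEval (z x) (f x) = 0) :
    P.leadingCoeff.IsRoot ζ := by
  have hlim : Tendsto (fun x => P.reverse.evalEval (z x) (f x)⁻¹) l
      (𝓝 (P.reverse.evalEval ζ 0)) :=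
    ((continuous_evalEval P.reverse).tendsto (ζ, 0)).comp
      (hz.prodMk_nhds (tendsto_inv₀_cobounded.comp hf))
  have hzero : ∀ᶠ x in l, P.reverse.evalEval (z x) (f x)⁻¹ = 0 := by
    filter_upwards [hP, hf.eventually (eventually_ne_cobounded 0)] with x hx hfx
    let := invertibleOfNonzero hfx
    rw [← eval₂_evalRingHom, ← invOf_eq_inv, eval₂_reverse_eq_zero_iff, eval₂_evalRingHom, hx]
  have hvalue : P.reverse.evalEval ζ 0 = P.leadingCoeff.eval ζ := by
    rw [evalEval, C_0, ← coeff_zero_eq_eval_zero, coeff_zero_reverse]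
  rw [IsRoot, ← hvalue]
  exact tendsto_nhds_unique (hlim.congr' hzero) tendsto_const_nhds

theorem eq_zero_of_infinite_radial_poles {𝕜 : Type*} [NormedField 𝕜] [NormedAlgebra ℝ 𝕜]
    {f : 𝕜 → 𝕜} {P : 𝕜[X][Y]} (hP : ∀ z, ‖z‖ < 1 → P.evalEval z (f z) = 0)
    (hf : {ζ : 𝕜 | ‖ζ‖ ≤ 1 ∧ Tendsto f (radialFilter ζ) (cobounded 𝕜)}.Infinite) : P = 0 := by
  refine leadingCoeff_eq_zero.mp (eq_zero_of_infinite_isRoot _ (hf.mono ?_))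
  rintro ζ ⟨hζ, hpole⟩
  exact leadingCoeff_isRoot_of_tendsto_cobounded (radialFilter_le_nhds ζ) hpole
    ((eventually_radialFilter_norm_lt_one hζ).mono hP)

theorem not_exists_mul_eval_eq_of_transcendental {R : Type*} [CommRing R] {s : Set R} {f : R → R}
    (hf : ∀ P : R[X][Y], (∀ z ∈ s, P.evalEval z (f z) = 0) → P = 0) :
    ¬ ∃ p q : R[X], q ≠ 0 ∧ ∀ z ∈ s, f z * q.eval z = p.eval z := by
  rintro ⟨p, q, hq, h⟩
  have hP : (X * C q - C p : R[X][Y]) = 0 := hf _ fun z hz => by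
    rw [evalEval_sub, evalEval_mul, evalEval_X, evalEval_C, evalEval_C, h z hz, sub_self]
  exact hq (by simpa [coeff_C] using congrArg (coeff · 1) hP)

end AlgebraicFunctions

section PowerSeries

theorem not_summable_natCast_of_frequently_ne_zero {a : ℕ → ℕ} (ha : ∃ᶠ n in atTop, a n ≠ 0) :
    ¬ Summable fun n => (a n : ℝ) := by
  intro hs
  have hlt : ∀ᶠ n in atTop, (a n : ℝ) < 1 := hs.tendsto_atTop_zero.eventually_lt_const one_pos
  obtain ⟨n, hn, hn1⟩ := (ha.and_eventually hlt).exists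
  exact hn (Nat.lt_one_iff.mp (mod_cast hn1))

theorem tendsto_atTop_of_hasSum_of_not_summable {a : ℕ → ℝ} (ha : ∀ n, 0 ≤ a n)
    (hns : ¬ Summable a) {g : ℝ → ℝ}
    (hg : ∀ᶠ r in 𝓝[<] 1, HasSum (fun n => a n * r ^ n) (g r)) :
    Tendsto g (𝓝[<] 1) atTop := by
  refine tendsto_atTop.mpr fun M => ?_
  obtain ⟨N, hN⟩ :=
    (((not_summable_iff_tendsto_nat_atTop_of_nonneg ha).mp hns).eventually_gt_atTop M).exists
  have hcont : Continuous fun r : ℝ => ∑ n ∈ Finset.range N, a n * r ^ n := by fun_prop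
  have hpartial : ∀ᶠ r in 𝓝[<] (1 : ℝ), M < ∑ n ∈ Finset.range N, a n * r ^ n :=
    ((hcont.tendsto 1).mono_left nhdsWithin_le_nhds).eventually_const_lt (by simpa using hN)
  filter_upwards [hpartial, hg, eventually_mem_Ioo_zero_one] with r hM hsum hr
  exact hM.le.trans (sum_le_hasSum _ (fun n _ => mul_nonneg (ha n) (pow_nonneg hr.1.le n)) hsum)

theorem tendsto_cobounded_radialFilter_one {a : ℕ → ℝ} (ha : ∀ n, 0 ≤ a n) (hns : ¬ Summable a)
    {F : ℂ → ℂ} (hF : ∀ z : ℂ, ‖z‖ < 1 → HasSum (fun n => (a n : ℂ) * z ^ n) (F z)) :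
    Tendsto F (radialFilter 1) (cobounded ℂ) := by
  have hre : Tendsto (fun r : ℝ => (F r).re) (𝓝[<] 1) atTop := by
    refine tendsto_atTop_of_hasSum_of_not_summable ha hns ?_
    filter_upwards [eventually_mem_Ioo_zero_one] with r hr
    have hr1 : ‖(r : ℂ)‖ < 1 := by simpa [abs_of_pos hr.1] using hr.2
    simpa only [← Complex.ofReal_pow, ← Complex.ofReal_mul, Complex.ofReal_re]
      using Complex.hasSum_re (hF r hr1)
  rw [← tendsto_norm_atTop_iff_cobounded, radialFilter, tendsto_map'_iff]
  refine tendsto_atTop_mono (fun r => ?_) hre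
  simpa using Complex.re_le_norm (F r)

theorem summable_mul_pow_of_norm_le_one {R : Type*} [NormedRing R] [NormOneClass R]
    [CompleteSpace R] {a : ℕ → R} (ha : ∀ n, ‖a n‖ ≤ 1) {z : R} (hz : ‖z‖ < 1) :
    Summable fun n => a n * z ^ n :=
  .of_norm_bounded (summable_geometric_of_lt_one (norm_nonneg z) hz) fun n =>
    (norm_mul_le _ _).trans <| (mul_le_of_le_one_left (norm_nonneg _) (ha n)).trans
      (norm_pow_le z n)

variable {R : Type*} [CommRing R] [TopologicalSpace R] [IsTopologicalRing R] [T2Space R]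

theorem eq_one_add_mul_of_hasSum {a b : ℕ → R} {z A B : R} (h0 : b 0 = a 0)
    (hsucc : ∀ n, b (n + 1) = a (n + 1) + a n) (ha : HasSum (fun n => a n * z ^ n) A)
    (hb : HasSum (fun n => b n * z ^ n) B) : B = (1 + z) * A := by
  have htail : HasSum (fun n => a (n + 1) * z ^ (n + 1) + z * (a n * z ^ n))
      (A - a 0 + z * A) := by
    simpa using ((hasSum_nat_add_iff' 1).mpr ha).add (ha.mul_left z)
  have htail' : HasSum (fun n => a (n + 1) * z ^ (n + 1) + z * (a n * z ^ n)) (B - a 0) := by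
    convert! (hasSum_nat_add_iff' 1).mpr hb using 2 with n
    · rw [hsucc]; ring
    · simp [h0]
  linear_combination htail'.unique htail

theorem eq_geom_sum_mul_of_hasSum {a : ℕ → R} {z A B : R} (k : ℕ) [NeZero k]
    (ha : HasSum (fun n => a n * (z ^ k) ^ n) A) (hb : HasSum (fun n => a (n / k) * z ^ n) B) :
    B = (∑ i ∈ Finset.range k, z ^ i) * A := by
  have hprod : HasSum (fun p : ℕ × Fin k => a p.1 * (z ^ k) ^ p.1 * z ^ (p.2 : ℕ)) B := by
    rw [← (Nat.divModEquiv k).hasSum_iff]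
    convert! hb using 2 with n
    simp only [Function.comp_apply, Nat.divModEquiv_apply, mul_assoc, ← pow_mul, ← pow_add]
    simp [Nat.div_add_mod]
  refine (hprod.prod_fiberwise fun n => hasSum_fintype _).unique ?_
  simpa only [Finset.sum_range, ← Finset.mul_sum, mul_comm A] using ha.mul_right _

end PowerSeries

theorem infinite_setOf_isPrimitiveRoot {M ι : Type*} [CommMonoid M] [Infinite ι] {u : ι → ℕ}
    (hu : Function.Injective u) (hroot : ∀ i, ∃ ζ : M, IsPrimitiveRoot ζ (u i)) :
    {ζ : M | ∃ i, IsPrimitiveRoot ζ (u i)}.Infinite := by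
  choose ζ hζ using hroot
  refine infinite_of_injective_forall_mem (fun i j hij => hu ?_) fun i => ⟨i, hζ i⟩
  exact (hij ▸ hζ i).unique (hζ j)

section InverseThueMorse

/-- `c` is the inverse Prouhet–Thue–Morse sequence, given by its recursion; the values in `{0, 1}`
are encoded as natural numbers at most `1`. -/
structure IsInverseThueMorse (c : ℕ → ℕ) : Prop where
  le_one : ∀ n, c n ≤ 1
  zero : c 0 = 0
  one : c 1 = 1
  two : c 2 = 1
  three : c 3 = 0
  four_mul : ∀ n, 1 ≤ n → c (4 * n) = c (4 * n - 1)
  four_mul_add_one : ∀ n, 1 ≤ n → c (4 * n + 1) = c (4 * n - 1)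
  four_mul_add_two : ∀ n, 1 ≤ n → c (4 * n + 2) = c (4 * n - 1)
  four_mul_add_three : ∀ n, 1 ≤ n → c (4 * n + 3) = (c (4 * n - 1) + c n) % 2

/-- The coefficients `dₙ = c₄ₙ₊₃` of `D(X) = C(X) / (1 + X)`; also the common value of the inverse
Prouhet–Thue–Morse sequence on the block `4n + 3, …, 4n + 6`. -/
def blockValue (c : ℕ → ℕ) (n : ℕ) : ℕ :=
  c (4 * n + 3)

/-- The function `D(z) = ∑ dₙ zⁿ` on the unit disk, equal to `C(z) / (1 + z)`; outside the disk it
takes junk values. -/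
noncomputable def blockSeries (c : ℕ → ℕ) (z : ℂ) : ℂ :=
  ∑' n, (blockValue c n : ℂ) * z ^ n

namespace IsInverseThueMorse

variable {c : ℕ → ℕ}

theorem norm_natCast_le_one (hc : IsInverseThueMorse c) (n : ℕ) : ‖(c n : ℂ)‖ ≤ 1 := by
  rw [Complex.norm_natCast]
  exact_mod_cast hc.le_one n

theorem apply_add_three (hc : IsInverseThueMorse c) (n : ℕ) : c (n + 3) = blockValue c (n / 4) := by
  have h0 := hc.four_mul (n / 4 + 1) (by omega)
  have h1 := hc.four_mul_add_one (n / 4 + 1) (by omega)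
  have h2 := hc.four_mul_add_two (n / 4 + 1) (by omega)
  rw [show 4 * (n / 4 + 1) - 1 = 4 * (n / 4) + 3 by omega] at h0 h1 h2
  obtain h | h | h | h : n + 3 = 4 * (n / 4) + 3 ∨ n + 3 = 4 * (n / 4 + 1) ∨
    n + 3 = 4 * (n / 4 + 1) + 1 ∨ n + 3 = 4 * (n / 4 + 1) + 2 := by omega
  · rw [h, blockValue]
  · rw [h, blockValue, h0]
  · rw [h, blockValue, h1]
  · rw [h, blockValue, h2]

theorem blockValue_succ (hc : IsInverseThueMorse c) (n : ℕ) :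
    blockValue c (n + 1) = (blockValue c n + c (n + 1)) % 2 :=
  hc.four_mul_add_three (n + 1) n.succ_pos

theorem two_mul_add_two_eq (hc : IsInverseThueMorse c) (n : ℕ) : c (2 * n + 2) = c (2 * n + 1) := by
  cases n with
  | zero => rw [hc.two, hc.one]
  | succ n =>
    rw [show 2 * (n + 1) + 2 = 2 * n + 1 + 3 by ring, show 2 * (n + 1) + 1 = 2 * n + 3 by ring,
      hc.apply_add_three, hc.apply_add_three, show (2 * n + 1) / 4 = 2 * n / 4 by omega]

theorem blockValue_two_mul (hc : IsInverseThueMorse c) (n : ℕ) : blockValue c (2 * n) = 0 := by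
  induction n with
  | zero => exact hc.three
  | succ n ih =>
    have hodd := hc.blockValue_succ (2 * n)
    have heven := hc.blockValue_succ (2 * n + 1)
    rw [hc.two_mul_add_two_eq] at heven
    rw [show 2 * (n + 1) = 2 * n + 1 + 1 by ring]
    omega

theorem blockValue_two_mul_add_one (hc : IsInverseThueMorse c) (n : ℕ) :
    blockValue c (2 * n + 1) = c (2 * n + 1) := by
  rw [hc.blockValue_succ, hc.blockValue_two_mul, zero_add,
    Nat.mod_eq_of_lt (Nat.lt_succ_of_le (hc.le_one _))]

theorem succ_eq_blockValue_add (hc : IsInverseThueMorse c) (n : ℕ) :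
    c (n + 1) = blockValue c (n + 1) + blockValue c n := by
  obtain ⟨m, rfl | rfl⟩ := n.even_or_odd'
  · rw [hc.blockValue_two_mul_add_one, hc.blockValue_two_mul, add_zero]
  · rw [show 2 * m + 1 + 1 = 2 * (m + 1) by ring, hc.blockValue_two_mul, zero_add,
      hc.blockValue_two_mul_add_one, mul_add_one, hc.two_mul_add_two_eq]

theorem blockValue_four_mul_add_three (hc : IsInverseThueMorse c) (n : ℕ) :
    blockValue c (4 * n + 3) = blockValue c n := by
  rw [show 4 * n + 3 = 2 * (2 * n + 1) + 1 by ring, hc.blockValue_two_mul_add_one, blockValue]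
  ring_nf

theorem frequently_blockValue_ne_zero (hc : IsInverseThueMorse c) :
    ∃ᶠ n in atTop, blockValue c n ≠ 0 := by
  refine frequently_atTop.mpr fun N => ?_
  induction N with
  | zero => exact ⟨1, zero_le, by simp [hc.blockValue_two_mul_add_one 0, hc.one]⟩
  | succ N ih =>
    obtain ⟨m, hm, hne⟩ := ih
    exact ⟨4 * m + 3, by omega, by rwa [hc.blockValue_four_mul_add_three]⟩

section FunctionalEquation

variable {z : ℂ}

theorem hasSum_blockSeries (hc : IsInverseThueMorse c) (hz : ‖z‖ < 1) :
    HasSum (fun n => (blockValue c n : ℂ) * z ^ n) (blockSeries c z) :=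
  (summable_mul_pow_of_norm_le_one (fun n => hc.norm_natCast_le_one (4 * n + 3)) hz).hasSum

theorem eq_one_add_mul_blockSeries (hc : IsInverseThueMorse c) (hz : ‖z‖ < 1)
    {C : ℂ} (hC : HasSum (fun n => (c n : ℂ) * z ^ n) C) :
    C = (1 + z) * blockSeries c z :=
  eq_one_add_mul_of_hasSum (by simp [blockValue, hc.zero, hc.three])
    (fun n => mod_cast hc.succ_eq_blockValue_add n) (hc.hasSum_blockSeries hz) hC

theorem eq_one_add_mul_blockSeries_pow (hc : IsInverseThueMorse c) (hz : ‖z‖ < 1)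
    {C : ℂ} (hC : HasSum (fun n => (c n : ℂ) * z ^ n) C) :
    C = (1 + z) * (z + z ^ 3 * (1 + z ^ 2) * blockSeries c (z ^ 4)) := by
  have hz4 : ‖z ^ 4‖ < 1 := by
    rw [norm_pow]; exact pow_lt_one₀ (norm_nonneg z) hz four_ne_zero
  obtain ⟨B, hB⟩ : Summable fun n => (blockValue c (n / 4) : ℂ) * z ^ n :=
    summable_mul_pow_of_norm_le_one (fun n => hc.norm_natCast_le_one (4 * (n / 4) + 3)) hz
  have hblocks : B = (1 + z) * (1 + z ^ 2) * blockSeries c (z ^ 4) := by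
    rw [eq_geom_sum_mul_of_hasSum 4 (hc.hasSum_blockSeries hz4) hB]
    simp only [Finset.sum_range_succ, Finset.sum_range_zero]
    ring
  have htail : C - (z + z ^ 2) = z ^ 3 * B := by
    refine HasSum.unique ?_ (hB.mul_left (z ^ 3))
    convert! (hasSum_nat_add_iff' 3).mpr hC using 2 with n
    · rw [hc.apply_add_three]; ring
    · simp [Finset.sum_range_succ, hc.zero, hc.one, hc.two]
  linear_combination htail + z ^ 3 * hblocks

theorem blockSeries_eq (hc : IsInverseThueMorse c) (hz : ‖z‖ < 1) :
    blockSeries c z = z + z ^ 3 * (1 + z ^ 2) * blockSeries c (z ^ 4) := by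
  obtain ⟨C, hC⟩ : Summable fun n => (c n : ℂ) * z ^ n :=
    summable_mul_pow_of_norm_le_one hc.norm_natCast_le_one hz
  have hne : 1 + z ≠ 0 := by
    intro h
    rw [eq_neg_of_add_eq_zero_right h, norm_neg, norm_one] at hz
    exact hz.false
  exact mul_left_cancel₀ hne <|
    (hc.eq_one_add_mul_blockSeries hz hC).symm.trans (hc.eq_one_add_mul_blockSeries_pow hz hC)

end FunctionalEquation

theorem tendsto_blockSeries_radialFilter_one (hc : IsInverseThueMorse c) :
    Tendsto (blockSeries c) (radialFilter 1) (cobounded ℂ) :=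
  tendsto_cobounded_radialFilter_one (fun n => Nat.cast_nonneg (blockValue c n))
    (not_summable_natCast_of_frequently_ne_zero hc.frequently_blockValue_ne_zero)
    fun _ hz => mod_cast hc.hasSum_blockSeries hz

theorem tendsto_blockSeries_radialFilter_of_pow_four (hc : IsInverseThueMorse c) {ζ : ℂ}
    (hζ : ‖ζ‖ = 1) (hζ2 : ζ ^ 2 ≠ -1)
    (hpole : Tendsto (blockSeries c) (radialFilter (ζ ^ 4)) (cobounded ℂ)) :
    Tendsto (blockSeries c) (radialFilter ζ) (cobounded ℂ) := by
  have hζ0 : ζ ≠ 0 := norm_ne_zero_iff.mp (hζ.trans_ne one_ne_zero)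
  have hcoeff : ζ ^ 3 * (1 + ζ ^ 2) ≠ 0 :=
    mul_ne_zero (pow_ne_zero 3 hζ0) fun h => hζ2 (eq_neg_of_add_eq_zero_right h)
  exact tendsto_cobounded_of_mahler_equation four_ne_zero continuousAt_id
    (v := fun z => z ^ 3 * (1 + z ^ 2)) (by fun_prop) hcoeff
    ((eventually_radialFilter_norm_lt_one hζ.le).mono fun _ hz => hc.blockSeries_eq hz) hpole

theorem tendsto_blockSeries_of_isPrimitiveRoot (hc : IsInverseThueMorse c) (k : ℕ) {ζ : ℂ}
    (hζ : IsPrimitiveRoot ζ (2 * 4 ^ k)) :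
    Tendsto (blockSeries c) (radialFilter ζ) (cobounded ℂ) := by
  induction k generalizing ζ with
  | zero =>
    obtain rfl : ζ = -1 := (by simpa using hζ : IsPrimitiveRoot ζ 2).eq_neg_one_of_two_right
    refine hc.tendsto_blockSeries_radialFilter_of_pow_four (by simp) (by norm_num) ?_
    simpa [show (-1 : ℂ) ^ 4 = 1 by norm_num] using hc.tendsto_blockSeries_radialFilter_one
  | succ k ih =>
    refine hc.tendsto_blockSeries_radialFilter_of_pow_four (hζ.norm'_eq_one (by positivity)) ?_
      (ih (hζ.pow (by positivity) (by ring)))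
    intro h2
    have h4 : ζ ^ 4 = 1 := by linear_combination (ζ ^ 2 - 1) * h2
    have hle := Nat.le_of_dvd four_pos (hζ.dvd_of_pow_eq_one 4 h4)
    have := Nat.one_le_pow k 4 four_pos
    rw [pow_succ] at hle
    omega

theorem infinite_radial_poles (hc : IsInverseThueMorse c) {f : ℂ → ℂ}
    (hf : ∀ z : ℂ, ‖z‖ < 1 → HasSum (fun n => (c n : ℂ) * z ^ n) (f z)) :
    {ζ : ℂ | ‖ζ‖ ≤ 1 ∧ Tendsto f (radialFilter ζ) (cobounded ℂ)}.Infinite := by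
  have hroots : {ζ : ℂ | ∃ k : ℕ, IsPrimitiveRoot ζ (2 * 4 ^ k)}.Infinite :=
    infinite_setOf_isPrimitiveRoot
      ((mul_right_injective₀ two_ne_zero).comp (Nat.pow_right_injective (by norm_num)))
      fun k => ⟨_, Complex.isPrimitiveRoot_exp _ (by positivity)⟩
  refine (hroots.sdiff (finite_singleton (-1))).mono ?_
  rintro ζ ⟨⟨k, hζ⟩, hne⟩
  have hnorm : ‖ζ‖ = 1 := hζ.norm'_eq_one (by positivity)
  have hζ1 : 1 + ζ ≠ 0 := fun h => hne (eq_neg_of_add_eq_zero_right h)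
  refine ⟨hnorm.le, Tendsto.congr' ?_ <| tendsto_mul_cobounded
    ((continuous_const.add continuous_id).tendsto ζ |>.mono_left (radialFilter_le_nhds ζ)) hζ1
    (hc.tendsto_blockSeries_of_isPrimitiveRoot k hζ)⟩
  filter_upwards [eventually_radialFilter_norm_lt_one hnorm.le] with z hz
  exact (hc.eq_one_add_mul_blockSeries hz (hf z hz)).symm

end IsInverseThueMorse

end InverseThueMorse

/-- The holomorphic function `C(z) = ∑ cₙ zⁿ` on the open unit disk is
transcendental over `ℂ(X)`: no nonzero polynomial `P ∈ ℂ[X][Y]` satisfies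
`P(z, C(z)) = 0` on the disk. In particular `C` is not a rational function. -/
theorem iptm_series_transcendental (c : ℕ → ℕ) (hcv : ∀ n, c n = 0 ∨ c n = 1)
    (hc0 : c 0 = 0) (hc1 : c 1 = 1) (hc2 : c 2 = 1) (hc3 : c 3 = 0)
    (h40 : ∀ n : ℕ, 1 ≤ n → c (4 * n) = c (4 * n - 1))
    (h41 : ∀ n : ℕ, 1 ≤ n → c (4 * n + 1) = c (4 * n - 1))
    (h42 : ∀ n : ℕ, 1 ≤ n → c (4 * n + 2) = c (4 * n - 1))
    (h43 : ∀ n : ℕ, 1 ≤ n → c (4 * n + 3) = (c (4 * n - 1) + c n) % 2)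
    (f : ℂ → ℂ) (hf : ∀ z : ℂ, ‖z‖ < 1 → HasSum (fun n => (c n : ℂ) * z ^ n) (f z)) :
    (∀ P : Polynomial (Polynomial ℂ),
      (∀ z : ℂ, ‖z‖ < 1 →
        Polynomial.eval (f z) (P.map (Polynomial.evalRingHom z)) = 0) → P = 0) ∧
    ¬ ∃ p q : Polynomial ℂ, q ≠ 0 ∧
        ∀ z : ℂ, ‖z‖ < 1 → f z * Polynomial.eval z q = Polynomial.eval z p := by
  have hc : IsInverseThueMorse c :=
    ⟨fun n => by rcases hcv n with h | h <;> simp [h], hc0, hc1, hc2, hc3, h40, h41, h42, h43⟩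
  have transcendental (P : ℂ[X][Y]) (hP : ∀ z ∈ {z : ℂ | ‖z‖ < 1}, P.evalEval z (f z) = 0) :
      P = 0 :=
    eq_zero_of_infinite_radial_poles hP (hc.infinite_radial_poles hf)
  refine ⟨fun P hP => transcendental P fun z hz => ?_,
    not_exists_mul_eval_eq_of_transcendental transcendental⟩
  rw [← map_evalRingHom_eval]
  exact hP z hz
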